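/- Let u be an allowed m-word (m ≥ 1), let k ≥ 0 be such that 2^k ≤ m < 2^{k+1}, set q = m − 2^k, and let i be the least integer such that u = w_i^(m). Then 1 ≤ i ≤ 3·2^k, the frequency freq(u) exists, and: (1) if i ≤ 2^k − q, or if q < 2^{k−1} and 2^k < i ≤ 2^k + 2^{k−1} − q, then freq(u) = 2/(3·2^k); (2) otherwise freq(u) = 1/(3·2^k). -/

import Mathlib

/-! Write `N = 2^k`. A position not divisible by `2^s` has its letter determined by its residue
modulo `2^s`, and `pd (2^s * a)` determines `pd a`. So the word at `r + N t` (`1 ≤ r ≤ N`,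
`N ≤ m < 2N`) is determined by `r`, by `pd (t+1)` and, if `r + m > 2N`, by `pd (t+2)`
(`wordAt_eq_iff`).

Conversely a word nearly determines the residue of its position (`recog`): if two equal words sit
at positions that differ modulo `N`, then the positions agree modulo `2^s = N/2`, the window
contains exactly two multiples of `2^s`, and both carry the letter of `2^s`. In this exceptional
case the occurrences are the `r + 2^s t` with `pd (t+1) = pd (t+2) = 0`; otherwise they are the
`r + N t` with prescribed `pd (t+1)` and possibly `pd (t+2)`.

Every frequency is therefore that of a word of length at most two, divided by the step of the
arithmetic progression (`EDens.progression`). The words of length one and two are counted through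
`∑ pd`, whose recursion `S n = ⌊n/2⌋ - S ⌊n/2⌋` gives `|3 S n - n| ≤ log₂ n + 1`. -/

open Filter Topology

/-- The period-doubling sequence (1-based): `pd i = k_i mod 2` where `k_i` is the
largest `k` such that `2^k` divides `i`. -/
def pd (i : ℕ) : ℕ := padicValNat 2 i % 2

/-- The `m`-word `w_i^(m) = ω_i ω_{i+1} ⋯ ω_{i+m-1}` of the period-doubling sequence. -/
def wordAt (i m : ℕ) : List ℕ := (List.range m).map (fun h => pd (i + h))

/-- An `m`-word is allowed if it occurs in the period-doubling sequence. -/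
def Allowed (m : ℕ) (v : List ℕ) : Prop := ∃ i, 1 ≤ i ∧ wordAt i m = v

/-- The complexity function of the period-doubling sequence. -/
noncomputable def pdComplexity (m : ℕ) : ℕ := Set.ncard {v | Allowed m v}

/-- `HasFreq m v c`: the frequency of the `m`-word `v` in the period-doubling
sequence exists and equals `c`. -/
def HasFreq (m : ℕ) (v : List ℕ) (c : ℝ) : Prop :=
  Tendsto (fun n : ℕ => (((Finset.Icc 1 n).filter (fun i => wordAt i m = v)).card : ℝ) / n)
    atTop (𝓝 c)

open Classical in
/-- The correlation sum `C(ω, n, m)` of the period-doubling sequence, for a distance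
threshold `ε` with `2^{-m} ≤ ε < 2^{-m+1}`. -/
noncomputable def corrSum (n m : ℕ) : ℝ :=
  (((Finset.range n ×ˢ Finset.range n).filter
      (fun p : ℕ × ℕ => ∀ h ∈ Finset.Icc 1 m, pd (p.1 + h) = pd (p.2 + h))).card : ℝ) / (n : ℝ) ^ 2

/-- The period-doubling substitution `ζ(0) = 01`, `ζ(1) = 00`, extended to a morphism
on finite words. -/
def substWord (w : List ℕ) : List ℕ := (w.map (fun a => if a = 0 then [0, 1] else [0, 0])).flatten

/-- The period-doubling substitution acting on one-sided infinite sequences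
(0-based indexing). -/
def substSeq (x : ℕ → ℕ) : ℕ → ℕ := fun n =>
  if n % 2 = 0 then 0 else if x (n / 2) = 0 then 1 else 0

/-! ### The sequence modulo powers of two -/

lemma pd_odd (a : ℕ) : pd (2 * a + 1) = 0 := by
  unfold pd
  rw [padicValNat.eq_zero_of_not_dvd (by omega)]

lemma pd_two_mul {a : ℕ} (ha : 1 ≤ a) : pd (2 * a) = 1 - pd a := by
  unfold pd
  rw [padicValNat.mul (by norm_num) (by omega), padicValNat.self (by norm_num)]
  omega

lemma pd_le_one (a : ℕ) : pd a ≤ 1 := by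
  unfold pd
  omega

lemma pd_of_mod_two {a : ℕ} (h : a % 2 = 1) : pd a = 0 := by
  obtain ⟨b, rfl⟩ : ∃ b, a = 2 * b + 1 := ⟨a / 2, by omega⟩
  exact pd_odd b

lemma pd_of_mod_four {a : ℕ} (h : a % 4 = 2) : pd a = 1 := by
  obtain ⟨b, rfl⟩ : ∃ b, a = 2 * (2 * b + 1) := ⟨a / 4, by omega⟩
  rw [pd_two_mul (by omega), pd_odd]

lemma pd_congr (s : ℕ) : ∀ x y : ℕ, x ≡ y [MOD 2 ^ s] → ¬ 2 ^ s ∣ x → pd x = pd y := by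
  induction s with
  | zero => intro x y _ h; simp at h
  | succ s ih =>
    intro x y hxy hx
    have hy : ¬ 2 ^ (s + 1) ∣ y := fun h => hx ((hxy.dvd_iff dvd_rfl).2 h)
    have h2 : x % 2 = y % 2 := hxy.of_dvd (dvd_pow_self 2 (Nat.succ_ne_zero s))
    rcases Nat.mod_two_eq_zero_or_one x with h | h
    · obtain ⟨a, rfl⟩ : ∃ a, x = 2 * a := ⟨x / 2, by omega⟩
      obtain ⟨b, rfl⟩ : ∃ b, y = 2 * b := ⟨y / 2, by omega⟩
      have ha : a ≠ 0 := by rintro rfl; simp at hx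
      have hb : b ≠ 0 := by rintro rfl; simp at hy
      rw [pd_two_mul (by omega), pd_two_mul (by omega)]
      rw [pow_succ', Nat.mul_dvd_mul_iff_left (by norm_num)] at hx
      rw [ih a b ?_ hx]
      rw [pow_succ'] at hxy
      exact Nat.ModEq.mul_left_cancel' (by norm_num) hxy
    · rw [pd_of_mod_two h, pd_of_mod_two (by omega)]

lemma pd_pow_mul_inj (s : ℕ) {a b : ℕ} (ha : 1 ≤ a) (hb : 1 ≤ b) :
    pd (2 ^ s * a) = pd (2 ^ s * b) ↔ pd a = pd b := by
  induction s with
  | zero => simp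
  | succ s ih =>
    have h := Nat.pow_pos (n := s) (show 0 < 2 by norm_num)
    rw [← ih, pow_succ', mul_assoc, mul_assoc, pd_two_mul (Nat.mul_pos h ha),
      pd_two_mul (Nat.mul_pos h hb)]
    have := pd_le_one (2 ^ s * a)
    have := pd_le_one (2 ^ s * b)
    omega

/-! ### Equality of words -/

lemma wordAt_ext {i j m : ℕ} : wordAt i m = wordAt j m ↔ ∀ h < m, pd (i + h) = pd (j + h) := by
  unfold wordAt
  rw [List.map_inj_left]
  simp

/-- Comparing the letters of equal words at the `e`-th multiple of `2^s` in the window. -/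
lemma pd_eq_of_wordAt_eq {s r t t' m : ℕ} (hr : r ≤ 2 ^ s)
    (h : wordAt (r + 2 ^ s * t) m = wordAt (r + 2 ^ s * t') m) (e : ℕ) (he : 1 ≤ e)
    (hem : e * 2 ^ s < r + m) : pd (t + e) = pd (t' + e) := by
  have hle : r ≤ e * 2 ^ s := hr.trans (Nat.le_mul_of_pos_left _ he)
  have h1 := wordAt_ext.1 h (e * 2 ^ s - r) (by omega)
  have e1 : ∀ x, r + 2 ^ s * x + (e * 2 ^ s - r) = 2 ^ s * (x + e) := by
    intro x
    rw [mul_add, mul_comm (2 ^ s) e]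
    omega
  rw [e1, e1] at h1
  exact (pd_pow_mul_inj s (by omega) (by omega)).1 h1

/-- For a window meeting at most two multiples of `2^s`, words at positions congruent modulo `2^s`
are compared by their letters at these multiples alone. -/
lemma wordAt_eq_iff {s r t t' m : ℕ} (hr1 : 1 ≤ r) (hr : r ≤ 2 ^ s) (hm : 2 ^ s ≤ m)
    (hm3 : r + m ≤ 3 * 2 ^ s) :
    wordAt (r + 2 ^ s * t) m = wordAt (r + 2 ^ s * t') m ↔
      pd (t + 1) = pd (t' + 1) ∧ (2 * 2 ^ s < r + m → pd (t + 2) = pd (t' + 2)) := by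
  constructor
  · intro h
    exact ⟨pd_eq_of_wordAt_eq hr h 1 le_rfl (by omega),
      fun h2 => pd_eq_of_wordAt_eq hr h 2 (by norm_num) h2⟩
  · rintro ⟨h1, h2⟩
    rw [wordAt_ext]
    intro h hh
    by_cases hd : 2 ^ s ∣ r + h
    · obtain ⟨e, he⟩ := hd
      have hp := Nat.pow_pos (n := s) (show 0 < 2 by norm_num)
      have e1 : ∀ x, r + 2 ^ s * x + h = 2 ^ s * (x + e) := by
        intro x
        rw [mul_add]
        omega
      rw [e1, e1, pd_pow_mul_inj s]
      · have he3 : e < 3 := by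
          by_contra hc
          have := Nat.mul_le_mul_left (2 ^ s) (show 3 ≤ e by omega)
          omega
        interval_cases e
        · omega
        · exact h1
        · exact h2 (by omega)
      all_goals
        have : e ≠ 0 := by rintro rfl; omega
        omega
    · have e1 : ∀ x, r + 2 ^ s * x + h = (r + h) + 2 ^ s * x := by intro x; omega
      have e2 : ∀ x, r + h ≡ (r + h) + 2 ^ s * x [MOD 2 ^ s] := by intro x; simp [Nat.ModEq]
      rw [e1, e1]
      exact (pd_congr s _ _ (e2 _) hd).symm.trans (pd_congr s _ _ (e2 _) hd)

/-! ### Recognizability -/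

lemma exists_residue (L i : ℕ) (hL : 1 ≤ L) (hi : 1 ≤ i) :
    ∃ r t, i = r + L * t ∧ 1 ≤ r ∧ r ≤ L := by
  refine ⟨(i - 1) % L + 1, (i - 1) / L, ?_, by omega, Nat.mod_lt _ hL⟩
  have := Nat.mod_add_div (i - 1) L
  omega

lemma exists_residue_of_modEq {L i j : ℕ} (hL : 1 ≤ L) (hi : 1 ≤ i) (hj : 1 ≤ j)
    (h : i ≡ j [MOD L]) :
    ∃ r t t', i = r + L * t ∧ j = r + L * t' ∧ 1 ≤ r ∧ r ≤ L := by
  obtain ⟨r, t, rfl, h1, h2⟩ := exists_residue L i hL hi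
  obtain ⟨r', t', rfl, h1', h2'⟩ := exists_residue L j hL hj
  have h3 : r ≡ r' [MOD L] := by simpa [Nat.ModEq] using h
  have h4 : r = r' := by
    have h5 : r - 1 ≡ r' - 1 [MOD L] := by
      apply Nat.ModEq.add_right_cancel' 1
      rwa [Nat.sub_add_cancel h1, Nat.sub_add_cancel h1']
    have := h5.eq_of_lt_of_lt (by omega) (by omega)
    omega
  subst h4
  exact ⟨r, t, t', rfl, rfl, h1, h2⟩

/-- Three consecutive letters fix the parity: if `a` and `b` have different parity, then of two
equal letters at `a + e`, `b + e` one sits at an odd position, so the other is at a multiple of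
four. -/
lemma parity_of_three {a b : ℕ} (h0 : pd a = pd b)
    (h1 : pd (a + 1) = pd (b + 1)) (h2 : pd (a + 2) = pd (b + 2)) : a % 2 = b % 2 := by
  by_contra hne
  have o := @pd_of_mod_two
  have f := @pd_of_mod_four
  have o1 := @o a; have o2 := @o b; have o3 := @o (a + 1); have o4 := @o (b + 1)
  have o5 := @o (a + 2); have o6 := @o (b + 2)
  have f1 := @f a; have f2 := @f b; have f3 := @f (a + 1); have f4 := @f (b + 1)
  have f5 := @f (a + 2); have f6 := @f (b + 2)
  omega

lemma modEq_step {s r t t' : ℕ} (h : t % 2 = t' % 2) :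
    r + 2 ^ s * t ≡ r + 2 ^ s * t' [MOD 2 ^ (s + 1)] := by
  rw [pow_succ]
  exact Nat.ModEq.add_left _ (Nat.ModEq.mul_left' _ h)

lemma modEq_of_three (s : ℕ) : ∀ {i j m : ℕ}, 1 ≤ i → 1 ≤ j → 3 * 2 ^ s ≤ m →
    wordAt i m = wordAt j m → i ≡ j [MOD 2 ^ (s + 1)] := by
  induction s with
  | zero =>
    intro i j m hi hj hm h
    have h' := wordAt_ext.1 h
    have h0 := h' 0 (by omega)
    have h1 := h' 1 (by omega)
    have h2 := h' 2 (by omega)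
    simpa [Nat.ModEq] using parity_of_three h0 h1 h2
  | succ s ih =>
    intro i j m hi hj hm h
    have h1 := ih hi hj (by rw [pow_succ] at hm; omega) h
    obtain ⟨r, t, t', rfl, rfl, hr1, hr⟩ := exists_residue_of_modEq Nat.one_le_two_pow hi hj h1
    apply modEq_step
    have a1 := pd_eq_of_wordAt_eq hr h 1 le_rfl (by omega)
    have a2 := pd_eq_of_wordAt_eq hr h 2 (by omega) (by omega)
    have a3 := pd_eq_of_wordAt_eq hr h 3 (by omega) (by omega)
    have := parity_of_three a1 a2 a3
    omega

/-- All occurrences of a word of length at least `2^(s+1)` lie in one class modulo `2^s`. -/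
lemma modEq_half {s m i j : ℕ} (hk : 2 ^ (s + 1) ≤ m) (hi : 1 ≤ i) (hj : 1 ≤ j)
    (h : wordAt i m = wordAt j m) : i ≡ j [MOD 2 ^ s] := by
  rcases s with _ | s
  · simp [Nat.modEq_one]
  · exact modEq_of_three s hi hj (by rw [pow_succ, pow_succ] at hk; omega) h

/-- The positions `i` whose `m`-word also occurs at another residue modulo `2^k`: the window meets
exactly two multiples of `2^(k-1)`, both carrying the letter of `2^(k-1)`. -/
def Exceptional (k m i : ℕ) : Prop :=
  ∃ s r t, k = s + 1 ∧ i = r + 2 ^ s * t ∧ 1 ≤ r ∧ r ≤ 2 ^ s ∧ r + m ≤ 3 * 2 ^ s ∧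
    pd (t + 1) = 0 ∧ pd (t + 2) = 0

/-- At all but the exceptional positions, the word determines the position modulo `2^k`. -/
lemma recog {k m i j : ℕ} (hk : 2 ^ k ≤ m) (hi : 1 ≤ i) (hj : 1 ≤ j)
    (h : wordAt i m = wordAt j m) (hE : ¬ Exceptional k m i) : i ≡ j [MOD 2 ^ k] := by
  rcases k with _ | s
  · simp [Nat.modEq_one]
  have h0 : i ≡ j [MOD 2 ^ s] := modEq_half hk hi hj h
  obtain ⟨r, t, t', rfl, rfl, hr1, hr⟩ := exists_residue_of_modEq Nat.one_le_two_pow hi hj h0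
  apply modEq_step
  rw [pow_succ] at hk
  have a1 := pd_eq_of_wordAt_eq hr h 1 le_rfl (by omega)
  have a2 := pd_eq_of_wordAt_eq hr h 2 (by omega) (by omega)
  by_contra hne
  by_cases h3 : r + m ≤ 3 * 2 ^ s
  · refine hE ⟨s, r, t, rfl, rfl, hr1, hr, h3, ?_⟩
    have o1 := @pd_of_mod_two (t + 1)
    have o2 := @pd_of_mod_two (t + 2)
    have o3 := @pd_of_mod_two (t' + 1)
    have o4 := @pd_of_mod_two (t' + 2)
    omega
  · have a3 := pd_eq_of_wordAt_eq hr h 3 (by omega) (by omega)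
    have := parity_of_three a1 a2 a3
    omega

/-! ### Counting -/

open Classical in
/-- The number of positions `1 ≤ a ≤ n` satisfying `P`. -/
noncomputable def cnt (P : ℕ → Prop) (n : ℕ) : ℕ := ((Finset.Icc 1 n).filter P).card

/-- `P` has density `c`, with a logarithmic error term. -/
def EDens (P : ℕ → Prop) (c : ℝ) : Prop :=
  ∃ A : ℝ, 0 ≤ A ∧ ∀ n : ℕ, |(cnt P n : ℝ) - c * n| ≤ A * (Nat.log 2 n + 1)

lemma EDens.congr {P Q : ℕ → Prop} {c : ℝ} (h : EDens P c) (hPQ : ∀ a, 1 ≤ a → (P a ↔ Q a)) :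
    EDens Q c := by
  obtain ⟨A, hA, hb⟩ := h
  refine ⟨A, hA, fun n => ?_⟩
  have : cnt Q n = cnt P n := by
    classical
    unfold cnt
    congr 1
    apply Finset.filter_congr
    intro a ha
    exact (hPQ a (Finset.mem_Icc.1 ha).1).symm
  rw [this]
  exact hb n

lemma tendsto_natLog_div : Tendsto (fun n : ℕ => ((Nat.log 2 n : ℝ) + 1) / n) atTop (𝓝 0) := by
  have h1 : Tendsto (fun n : ℕ => Real.log n / n) atTop (𝓝 0) := by
    have := Real.isLittleO_log_id_atTop.tendsto_div_nhds_zero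
    exact this.comp tendsto_natCast_atTop_atTop
  have h2 : Tendsto (fun n : ℕ => (1 : ℝ) / n) atTop (𝓝 0) := tendsto_one_div_atTop_nhds_zero_nat
  have h3 : Tendsto (fun n : ℕ => (Real.log 2)⁻¹ * (Real.log n / n) + 1 / n) atTop (𝓝 0) := by
    simpa using (h1.const_mul (Real.log 2)⁻¹).add h2
  refine squeeze_zero (fun n => by positivity) (fun n => ?_) h3
  have h4 : (Nat.log 2 n : ℝ) ≤ Real.logb 2 n := by
    exact_mod_cast Real.natLog_le_logb n 2
  calc ((Nat.log 2 n : ℝ) + 1) / n ≤ (Real.logb 2 n + 1) / n := by gcongr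
    _ = _ := by unfold Real.logb; ring

lemma EDens.hasFreq {m : ℕ} {v : List ℕ} {c : ℝ} (h : EDens (fun j => wordAt j m = v) c) :
    HasFreq m v c := by
  obtain ⟨A, -, hb⟩ := h
  unfold HasFreq
  rw [tendsto_iff_norm_sub_tendsto_zero]
  have h0 : Tendsto (fun n : ℕ => A * (((Nat.log 2 n : ℝ) + 1) / n)) atTop (𝓝 0) := by
    simpa using tendsto_natLog_div.const_mul A
  refine squeeze_zero' (Eventually.of_forall fun n => norm_nonneg _) ?_ h0
  filter_upwards [eventually_gt_atTop 0] with n hn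
  have hn' : (0 : ℝ) < n := by exact_mod_cast hn
  have h1 := hb n
  have e : cnt (fun j => wordAt j m = v) n
      = ((Finset.Icc 1 n).filter (fun i => wordAt i m = v)).card := by
    unfold cnt
    congr!
  rw [e] at h1
  rw [Real.norm_eq_abs, ← mul_div_assoc, le_div_iff₀ hn']
  calc _ = |(((Finset.Icc 1 n).filter (fun i => wordAt i m = v)).card / (n : ℝ) - c) * n| := by
        rw [abs_mul, abs_of_pos hn']
    _ ≤ _ := by
        convert h1 using 2
        field_simp

/-- Passing to a progression of step `L` divides the density by `L`; the index `a = t + 1` is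
shifted so that it starts at one. -/
lemma EDens.progression {P : ℕ → Prop} {c : ℝ} (h : EDens P c) {L r : ℕ} (hr1 : 1 ≤ r)
    (hr : r ≤ L) : EDens (fun j => ∃ t, j = r + L * t ∧ P (t + 1)) (c / L) := by
  obtain ⟨A, hA, hb⟩ := h
  have hL : (0 : ℝ) < L := by exact_mod_cast (by omega : 0 < L)
  refine ⟨A + |c|, by positivity, fun n => ?_⟩
  set g := (n + L - r) / L with hg
  have hcard : cnt (fun j => ∃ t, j = r + L * t ∧ P (t + 1)) n = cnt P g := by
    unfold cnt
    symm
    have key : ∀ t, t + 1 ≤ g ↔ r + L * t ≤ n := by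
      intro t
      rw [hg, Nat.le_div_iff_mul_le (by omega), add_mul, mul_comm t L]
      omega
    apply Finset.card_bij (fun a _ => r + L * (a - 1))
    · intro a ha
      simp only [Finset.mem_filter, Finset.mem_Icc] at ha ⊢
      obtain ⟨⟨h1, h2⟩, h3⟩ := ha
      obtain ⟨t, rfl⟩ : ∃ t, a = t + 1 := ⟨a - 1, by omega⟩
      exact ⟨⟨by omega, (key t).1 h2⟩, t, by simp, h3⟩
    · intro a ha b hb' hab
      simp only [Finset.mem_filter, Finset.mem_Icc] at ha hb'
      have := Nat.eq_of_mul_eq_mul_left (by omega : 0 < L) (Nat.add_left_cancel hab)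
      omega
    · intro j hj
      simp only [Finset.mem_filter, Finset.mem_Icc] at hj
      obtain ⟨⟨h1, h2⟩, t, rfl, h3⟩ := hj
      refine ⟨t + 1, ?_, by simp⟩
      simp only [Finset.mem_filter, Finset.mem_Icc]
      exact ⟨⟨by omega, (key t).2 h2⟩, h3⟩
  have hgn : g ≤ n := by
    rcases Nat.eq_zero_or_pos n with rfl | hn
    · rw [hg]
      simp only [zero_add, nonpos_iff_eq_zero]
      exact Nat.div_eq_of_lt (by omega)
    · rw [hg]
      apply Nat.div_le_of_le_mul
      have : n + L ≤ L * n + 1 := by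
        obtain ⟨x, rfl⟩ : ∃ x, n = x + 1 := ⟨n - 1, by omega⟩
        have : x ≤ L * x := Nat.le_mul_of_pos_left _ (by omega)
        rw [mul_add]
        omega
      omega
  have hlog : (Nat.log 2 g : ℝ) ≤ Nat.log 2 n := by exact_mod_cast Nat.log_mono_right hgn
  have hdiff : |(g : ℝ) - n / L| ≤ 1 := by
    have d1 := Nat.div_add_mod (n + L - r) L
    have d2 := Nat.mod_lt (n + L - r) (show 0 < L by omega)
    rw [← hg] at d1
    have d3 : L * g ≤ n + L := by omega
    have d4 : n ≤ L * g + L := by omega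
    have d3' : (L : ℝ) * g ≤ n + L := by exact_mod_cast d3
    have d4' : (n : ℝ) ≤ L * g + L := by exact_mod_cast d4
    have e : (n : ℝ) / L * L = n := by field_simp
    rw [abs_le]
    constructor <;> nlinarith
  rw [hcard]
  have hlogn : (0 : ℝ) ≤ Nat.log 2 n := by positivity
  calc |(cnt P g : ℝ) - c / L * n| = |((cnt P g : ℝ) - c * g) + c * (g - n / L)| := by
        congr 1
        ring
    _ ≤ |(cnt P g : ℝ) - c * g| + |c| * |(g : ℝ) - n / L| := by
        rw [← abs_mul]
        exact abs_add_le _ _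
    _ ≤ A * (Nat.log 2 g + 1) + |c| * 1 := by
        gcongr
        exact hb g
    _ ≤ A * (Nat.log 2 n + 1) + |c| * (Nat.log 2 n + 1) := by
        gcongr
        linarith
    _ = _ := by ring

/-! ### Words of length one and two -/

lemma sum_pd_rec (n : ℕ) : ∑ a ∈ Finset.Icc 1 n, pd a + ∑ a ∈ Finset.Icc 1 (n / 2), pd a
    = n / 2 := by
  induction n with
  | zero => simp
  | succ n ih =>
    rw [Finset.sum_Icc_succ_top (by omega)]
    rcases Nat.even_or_odd' n with ⟨b, rfl | rfl⟩
    · rw [pd_odd, show (2 * b + 1) / 2 = 2 * b / 2 by omega]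
      exact ih
    · rw [show (2 * b + 1) / 2 = b by omega] at ih
      rw [show (2 * b + 1 + 1) / 2 = b + 1 by omega,
        Finset.sum_Icc_succ_top (show 1 ≤ b + 1 by omega),
        show 2 * b + 1 + 1 = 2 * (b + 1) by ring, pd_two_mul (by omega)]
      have := pd_le_one (b + 1)
      omega

lemma sum_pd_bound (n : ℕ) :
    |3 * ((∑ a ∈ Finset.Icc 1 n, pd a : ℕ) : ℤ) - n| ≤ Nat.log 2 n + 1 := by
  induction n using Nat.strong_induction_on with
  | _ n ih =>
    rcases lt_or_ge n 2 with h | h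
    · interval_cases n
      · simp
      · simp [pd_odd 0]
    · have h1 := ih (n / 2) (by omega)
      have h2 := sum_pd_rec n
      have h3 : Nat.log 2 n = Nat.log 2 (n / 2) + 1 := Nat.log_of_one_lt_of_le (by norm_num) h
      rw [h3]
      generalize ∑ a ∈ Finset.Icc 1 n, pd a = x at *
      generalize ∑ a ∈ Finset.Icc 1 (n / 2), pd a = y at *
      rw [abs_le] at *
      push_cast at *
      omega

lemma sum_pd_bound_real (n : ℕ) :
    |3 * ((∑ a ∈ Finset.Icc 1 n, pd a : ℕ) : ℝ) - n| ≤ Nat.log 2 n + 1 := by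
  exact_mod_cast sum_pd_bound n

lemma cnt_eq_sum (P : ℕ → Prop) (f : ℕ → ℤ) (n : ℕ) (h1 : ∀ a, 1 ≤ a → P a → f a = 1)
    (h0 : ∀ a, 1 ≤ a → ¬ P a → f a = 0) : (cnt P n : ℤ) = ∑ a ∈ Finset.Icc 1 n, f a := by
  classical
  unfold cnt
  rw [Finset.card_filter]
  push_cast
  apply Finset.sum_congr rfl
  intro a ha
  have := (Finset.mem_Icc.1 ha).1
  by_cases h : P a
  · simp [h, h1 a this h]
  · simp [h, h0 a this h]

lemma sum_pd_shift (n : ℕ) : ∑ a ∈ Finset.Icc 1 n, pd (a + 1)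
    = ∑ a ∈ Finset.Icc 1 n, pd a + pd (n + 1) := by
  induction n with
  | zero => simp [pd_odd 0]
  | succ n ih => rw [Finset.sum_Icc_succ_top (by omega), Finset.sum_Icc_succ_top (by omega), ih]

lemma pd_add_succ_le (a : ℕ) : pd a + pd (a + 1) ≤ 1 := by
  have := @pd_of_mod_two a
  have := @pd_of_mod_two (a + 1)
  have := pd_le_one a
  have := pd_le_one (a + 1)
  omega

lemma edens_one : EDens (fun a => pd a = 1) (1 / 3) := by
  refine ⟨1, by norm_num, fun n => ?_⟩
  have h := cnt_eq_sum (fun a => pd a = 1) (fun a => (pd a : ℤ)) n (fun a _ h => by simp [h])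
    (fun a _ h => by have := pd_le_one a; omega)
  have h' : cnt (fun a => pd a = 1) n = ∑ a ∈ Finset.Icc 1 n, pd a := by exact_mod_cast h
  have hb := sum_pd_bound_real n
  rw [h']
  rw [abs_le] at *
  constructor <;> linarith

lemma edens_zero : EDens (fun a => pd a = 0) (2 / 3) := by
  refine ⟨1, by norm_num, fun n => ?_⟩
  have h := cnt_eq_sum (fun a => pd a = 0) (fun a => 1 - (pd a : ℤ)) n (fun a _ h => by simp [h])
    (fun a _ h => by have := pd_le_one a; omega)
  rw [Finset.sum_sub_distrib] at h
  have h' : (cnt (fun a => pd a = 0) n : ℝ) = n - ((∑ a ∈ Finset.Icc 1 n, pd a : ℕ) : ℝ) := by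
    simp only [Finset.sum_const, Nat.card_Icc, Nat.add_sub_cancel, nsmul_eq_mul, mul_one] at h
    exact_mod_cast h
  have hb := sum_pd_bound_real n
  rw [h']
  rw [abs_le] at *
  constructor <;> linarith

lemma edens_one_zero : EDens (fun a => pd a = 1 ∧ pd (a + 1) = 0) (1 / 3) :=
  edens_one.congr fun a _ => by have := pd_add_succ_le a; omega

lemma edens_zero_one : EDens (fun a => pd a = 0 ∧ pd (a + 1) = 1) (1 / 3) := by
  refine ⟨2, by norm_num, fun n => ?_⟩
  have h := cnt_eq_sum (fun a => pd a = 0 ∧ pd (a + 1) = 1) (fun a => (pd (a + 1) : ℤ)) n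
    (fun a _ h => by simp [h])
    (fun a _ h => by have := pd_add_succ_le a; omega)
  have h' : cnt (fun a => pd a = 0 ∧ pd (a + 1) = 1) n = ∑ a ∈ Finset.Icc 1 n, pd (a + 1) := by
    exact_mod_cast h
  have hb := sum_pd_bound_real n
  rw [h', sum_pd_shift, Nat.cast_add]
  have h1 : (pd (n + 1) : ℝ) ≤ 1 := by exact_mod_cast pd_le_one (n + 1)
  have h0 : (0 : ℝ) ≤ pd (n + 1) := by positivity
  have hl : (0 : ℝ) ≤ Nat.log 2 n := by positivity
  rw [abs_le] at *
  constructor <;> linarith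

lemma edens_zero_zero : EDens (fun a => pd a = 0 ∧ pd (a + 1) = 0) (1 / 3) := by
  refine ⟨2, by norm_num, fun n => ?_⟩
  have h := cnt_eq_sum (fun a => pd a = 0 ∧ pd (a + 1) = 0)
    (fun a => 1 - (pd a : ℤ) - (pd (a + 1) : ℤ)) n
    (fun a _ h => by simp [h])
    (fun a _ h => by have := pd_add_succ_le a; omega)
  rw [Finset.sum_sub_distrib, Finset.sum_sub_distrib] at h
  have h' : (cnt (fun a => pd a = 0 ∧ pd (a + 1) = 0) n : ℝ)
      = n - ((∑ a ∈ Finset.Icc 1 n, pd a : ℕ) : ℝ)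
        - ((∑ a ∈ Finset.Icc 1 n, pd (a + 1) : ℕ) : ℝ) := by
    simp only [Finset.sum_const, Nat.card_Icc, Nat.add_sub_cancel, nsmul_eq_mul, mul_one] at h
    exact_mod_cast h
  have hb := sum_pd_bound_real n
  rw [h', sum_pd_shift, Nat.cast_add]
  have h1 : (pd (n + 1) : ℝ) ≤ 1 := by exact_mod_cast pd_le_one (n + 1)
  have h0 : (0 : ℝ) ≤ pd (n + 1) := by positivity
  have hl : (0 : ℝ) ≤ Nat.log 2 n := by positivity
  rw [abs_le] at *
  constructor <;> linarith

/-! ### Occurrences of a word -/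

/-- The frequency of a word all of whose occurrences lie in the class of `r` modulo `2^s`. -/
lemma hasFreq_of_class {s r t m : ℕ} {P : ℕ → Prop} {c : ℝ} (hr1 : 1 ≤ r) (hr : r ≤ 2 ^ s)
    (hm : 2 ^ s ≤ m) (hm3 : r + m ≤ 3 * 2 ^ s)
    (hcl : ∀ j, 1 ≤ j → wordAt j m = wordAt (r + 2 ^ s * t) m → r + 2 ^ s * t ≡ j [MOD 2 ^ s])
    (hP : EDens P c)
    (hPt : ∀ t', P (t' + 1) ↔
      pd (t' + 1) = pd (t + 1) ∧ (2 * 2 ^ s < r + m → pd (t' + 2) = pd (t + 2))) :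
    HasFreq m (wordAt (r + 2 ^ s * t) m) (c / 2 ^ s) := by
  apply EDens.hasFreq
  have h := hP.progression hr1 hr
  push_cast at h
  refine h.congr fun j hj => ?_
  constructor
  · rintro ⟨t', rfl, h'⟩
    exact (wordAt_eq_iff hr1 hr hm hm3).2 ((hPt t').1 h')
  · intro h'
    have h1 : r ≡ j [MOD 2 ^ s] := by simpa [Nat.ModEq] using hcl j hj h'
    obtain ⟨r', t1, t', e1, rfl, hr1', hr'⟩ :=
      exists_residue_of_modEq Nat.one_le_two_pow hr1 hj h1
    -- both `r` and `r'` lie in `[1, 2^s]`, so `r = r' + 2^s t1` leaves only `t1 = 0`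
    have ht1 : t1 = 0 := by
      by_contra hne
      have := Nat.le_mul_of_pos_right (2 ^ s) (Nat.pos_of_ne_zero hne)
      omega
    subst ht1
    simp only [mul_zero, add_zero] at e1
    subst e1
    exact ⟨t', rfl, (hPt t').2 ((wordAt_eq_iff hr1 hr hm hm3).1 h')⟩

lemma pd_one : pd 1 = 0 := pd_odd 0
lemma pd_two : pd 2 = 1 := pd_of_mod_four rfl
lemma pd_three : pd 3 = 0 := pd_odd 1
lemma pd_four : pd 4 = 0 := by
  rw [show 4 = 2 * 2 by rfl, pd_two_mul (by norm_num), pd_two]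

/-- A first occurrence starts in one of the first three blocks of length `2^k`, and not in the
third one if its window meets a single multiple of `2^k`. -/
lemma first_block {k m r t : ℕ} (hr1 : 1 ≤ r) (hr : r ≤ 2 ^ k) (hk : 2 ^ k ≤ m)
    (hk' : m < 2 * 2 ^ k)
    (hmin : ∀ j, 1 ≤ j → wordAt j m = wordAt (r + 2 ^ k * t) m → r + 2 ^ k * t ≤ j) :
    t ≤ 2 ∧ (r + m ≤ 2 * 2 ^ k → t ≤ 1) := by
  have hp := Nat.pow_pos (n := k) (show 0 < 2 by norm_num)
  have key : ∀ t0, pd (t0 + 1) = pd (t + 1) →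
      (2 * 2 ^ k < r + m → pd (t0 + 2) = pd (t + 2)) → t ≤ t0 := by
    intro t0 h1 h2
    have := hmin (r + 2 ^ k * t0) (by omega)
      ((wordAt_eq_iff hr1 hr hk (by omega)).2 ⟨h1, h2⟩)
    exact Nat.le_of_mul_le_mul_left (by omega) hp
  have k0 := key 0
  have k1 := key 1
  have k2 := key 2
  simp only [Nat.reduceAdd, pd_one, pd_two, pd_three, pd_four, zero_add] at k0 k1 k2
  have := pd_add_succ_le (t + 1)
  have e : t + 1 + 1 = t + 2 := rfl
  rw [e] at this
  omega

/-- An exceptional first occurrence starts in the first half of the second block. -/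
lemma exceptional_first {s m i : ℕ} (hk : 2 ^ (s + 1) ≤ m)
    (hmin : ∀ j, 1 ≤ j → wordAt j m = wordAt i m → i ≤ j)
    (hE : Exceptional (s + 1) m i) :
    ∃ r, i = r + 2 ^ s * 2 ∧ 1 ≤ r ∧ r ≤ 2 ^ s ∧ r + m ≤ 3 * 2 ^ s := by
  obtain ⟨s', r, t, hs, rfl, hr1, hr, hm3, p1, p2⟩ := hE
  obtain rfl : s = s' := by omega
  rw [pow_succ] at hk
  have hp := Nat.pow_pos (n := s) (show 0 < 2 by norm_num)
  -- the letters at `2^s * 3` and `2^s * 4` make `r + 2^s * 2` an occurrence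
  have h2 : t ≤ 2 := by
    have := hmin (r + 2 ^ s * 2) (by omega) ((wordAt_eq_iff hr1 hr (by omega) hm3).2
      ⟨by rw [p1, pd_three], fun _ => by rw [p2, pd_four]⟩)
    exact Nat.le_of_mul_le_mul_left (by omega) hp
  interval_cases t
  · simp [pd_two] at p2
  · simp [pd_two] at p1
  · exact ⟨r, rfl, hr1, hr, hm3⟩

theorem pd_freq_general (m k q i : ℕ) (u : List ℕ) (hm : 1 ≤ m)
    (hk : 2 ^ k ≤ m) (hk' : m < 2 ^ (k + 1)) (hq : q = m - 2 ^ k)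
    (hi : 1 ≤ i) (hu : wordAt i m = u)
    (hmin : ∀ j, 1 ≤ j → wordAt j m = u → i ≤ j) :
    i ≤ 3 * 2 ^ k ∧
    ((i ≤ 2 ^ k - q ∨ (q < 2 ^ k / 2 ∧ 2 ^ k < i ∧ i ≤ 2 ^ k + 2 ^ k / 2 - q)) →
      HasFreq m u (2 / (3 * 2 ^ k : ℝ))) ∧
    (¬(i ≤ 2 ^ k - q ∨ (q < 2 ^ k / 2 ∧ 2 ^ k < i ∧ i ≤ 2 ^ k + 2 ^ k / 2 - q)) →
      HasFreq m u (1 / (3 * 2 ^ k : ℝ))) := by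
  subst hu
  have hp := Nat.pow_pos (n := k) (show 0 < 2 by norm_num)
  have hk2 : m < 2 * 2 ^ k := by rw [pow_succ] at hk'; omega
  by_cases hE : Exceptional k m i
  · obtain ⟨s, rfl⟩ : ∃ s, k = s + 1 := by
      obtain ⟨s, _, _, h, _⟩ := hE
      exact ⟨s, h⟩
    obtain ⟨r, rfl, hr1, hr, hm3⟩ := exceptional_first hk hmin hE
    have hN : 2 ^ (s + 1) = 2 ^ s * 2 := pow_succ 2 s
    have hcond : q < 2 ^ (s + 1) / 2 ∧ 2 ^ (s + 1) < r + 2 ^ s * 2 ∧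
        r + 2 ^ s * 2 ≤ 2 ^ (s + 1) + 2 ^ (s + 1) / 2 - q := by omega
    refine ⟨by omega, fun _ => ?_, fun h => absurd (Or.inr hcond) h⟩
    have h := hasFreq_of_class (t := 2) hr1 hr (by omega) hm3
      (fun j hj h => modEq_half hk hi hj h.symm) edens_zero_zero (fun t' => by
        simp only [Nat.reduceAdd, pd_three, pd_four]
        constructor
        · rintro ⟨h1, h2⟩
          exact ⟨h1, fun _ => h2⟩
        · rintro ⟨h1, h2⟩
          exact ⟨h1, h2 (by omega)⟩)
    convert h using 1
    rw [pow_succ]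
    field_simp
  · have hcl : ∀ j, 1 ≤ j → wordAt j m = wordAt i m → i ≡ j [MOD 2 ^ k] :=
      fun j hj h => recog hk hi hj h.symm hE
    obtain ⟨r, t, rfl, hr1, hr⟩ := exists_residue (2 ^ k) i hp hi
    obtain ⟨ht, ht'⟩ := first_block hr1 hr hk hk2 hmin
    -- the second alternative of the first case describes exceptional positions only
    have hB : ¬ (q < 2 ^ k / 2 ∧ 2 ^ k < r + 2 ^ k * t ∧
        r + 2 ^ k * t ≤ 2 ^ k + 2 ^ k / 2 - q) := by
      rintro ⟨h1, h2, h3⟩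
      rcases k with _ | s
      · simp at h1
      have hN : 2 ^ (s + 1) = 2 ^ s * 2 := pow_succ 2 s
      have ht1 : t = 1 := by
        interval_cases t <;> omega
      subst ht1
      exact hE ⟨s, r, 2, rfl, by omega, hr1, by omega, by omega, pd_three, pd_four⟩
    have hA : r + 2 ^ k * t ≤ 2 ^ k - q ↔ t = 0 ∧ r + m ≤ 2 * 2 ^ k := by
      interval_cases t <;> omega
    rw [or_iff_left hB, hA]
    refine ⟨by interval_cases t <;> omega, ?_, ?_⟩
    · rintro ⟨rfl, h2⟩
      have h := hasFreq_of_class (t := 0) hr1 hr hk (by omega) hcl edens_zero (fun t' => by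
        simp only [zero_add, pd_one]
        constructor
        · intro h
          exact ⟨h, fun h => by omega⟩
        · exact fun h => h.1)
      convert h using 1
      field_simp
    · intro hn
      have hc : (1 / (3 * 2 ^ k : ℝ)) = (1 / 3) / 2 ^ k := by field_simp
      rw [hc]
      by_cases hS : r + m ≤ 2 * 2 ^ k
      · obtain rfl : t = 1 := by
          have := ht' hS
          omega
        refine hasFreq_of_class (t := 1) hr1 hr hk (by omega) hcl edens_one (fun t' => ?_)
        simp only [Nat.reduceAdd, pd_two]
        constructor
        · intro h
          exact ⟨h, fun h => by omega⟩
        · exact fun h => h.1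
      · have hS' : 2 * 2 ^ k < r + m := by omega
        interval_cases t
        · exact hasFreq_of_class (t := 0) hr1 hr hk (by omega) hcl edens_zero_one
            (fun t' => by simp [hS', pd_one, pd_two])
        · exact hasFreq_of_class (t := 1) hr1 hr hk (by omega) hcl edens_one_zero
            (fun t' => by simp [hS', pd_three, pd_two])
        · exact hasFreq_of_class (t := 2) hr1 hr hk (by omega) hcl edens_zero_zero
            (fun t' => by simp [hS', pd_three, pd_four])
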